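/- arXiv:1903.07792 — 2 statements merged into one kernel-verified Lean document; each statement's English description precedes it below -/
import Mathlib

section
/- Let ε > 0 and 0 < δ < 2, and set α := ε²/(ε + 2·log(2/δ)). Then 2·exp( −(ε − α/2)²/(2α) ) ≤ δ. -/
/-!
Expanding the square gives `(ε - α/2)² / (2α) = (ε²/α - ε)/2 + α/8`. For `α > 0`, the budget
`α ≤ ε² / (ε + 2 log (2/δ))` forces `(ε²/α - ε)/2 ≥ log (2/δ)`, and the term `α/8` is slack.
-/

lemma neg_sq_sub_half_div_two_mul {K : Type*} [Field K] [CharZero K] {α : K} (ε : K)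
    (hα : α ≠ 0) :
    -(ε - α / 2) ^ 2 / (2 * α) = -((ε ^ 2 / α - ε) / 2) - α / 8 := by
  field_simp
  ring

lemma neg_sq_sub_half_div_two_mul_le_neg {K : Type*} [Field K] [LinearOrder K]
    [IsStrictOrderedRing K] {ε α L : K} (hα₀ : 0 < α) (hα : α ≤ ε ^ 2 / (ε + 2 * L)) :
    -(ε - α / 2) ^ 2 / (2 * α) ≤ -L := by
  have hden : 0 < ε + 2 * L := by
    by_contra! h
    exact (hα₀.trans_le hα).not_ge (div_nonpos_of_nonneg_of_nonpos (sq_nonneg ε) h)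
  have hbudget : ε + 2 * L ≤ ε ^ 2 / α := (le_div_comm₀ hα₀ hden).mp hα
  rw [neg_sq_sub_half_div_two_mul ε hα₀.ne']
  linarith

theorem tail_bound_at_alpha_choice_general {ε δ α : ℝ} (hδ : 0 < δ) (hα₀ : 0 < α)
    (hα : α ≤ ε ^ 2 / (ε + 2 * Real.log (2 / δ))) :
    2 * Real.exp (-(ε - α / 2) ^ 2 / (2 * α)) ≤ δ :=
  calc 2 * Real.exp (-(ε - α / 2) ^ 2 / (2 * α))
      ≤ 2 * Real.exp (-Real.log (2 / δ)) := by
        gcongr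
        exact neg_sq_sub_half_div_two_mul_le_neg hα₀ hα
    _ = 2 * (δ / 2) := by rw [← Real.log_inv, inv_div, Real.exp_log (half_pos hδ)]
    _ = δ := mul_div_cancel₀ δ two_ne_zero

/-- Final verification in the proof of Theorem 1: with the choice
`α = ε²/(ε + 2 log(2/δ))`, the tail bound `2 exp(−(ε − α/2)²/(2α))` is at most `δ`. -/
theorem tail_bound_at_alpha_choice (ε δ : ℝ) (hε : 0 < ε) (hδ0 : 0 < δ) (hδ2 : δ < 2)
    (α : ℝ) (hα : α = ε ^ 2 / (ε + 2 * Real.log (2 / δ))) :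
    2 * Real.exp (-(ε - α / 2) ^ 2 / (2 * α)) ≤ δ := by
  have hlog : 0 < Real.log (2 / δ) := Real.log_pos ((one_lt_div hδ0).mpr hδ2)
  exact tail_bound_at_alpha_choice_general hδ0 (by rw [hα]; positivity) hα.le
end

section
/- Let ε > 0 and 0 < δ < 2, and write L := log(2/δ) > 0. Then for every α with 0 < α ≤ 2ε + 4L − 2·√( (ε + 2L)² − ε² ), one has 2·exp( −(ε − α/2)²/(2α) ) ≤ δ. -/
/-!
Taking logarithms, the tail bound says `2αL ≤ (ε − α/2)²`. In the variable `x = α/2` this is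
`0 ≤ x² − 2(ε + 2L)x + ε²`, and the right end of the range of `α` is twice the smaller root of
this quadratic.
-/

theorem mul_exp_neg_le_iff_log_div_le {a d x : ℝ} (ha : 0 < a) (hd : 0 < d) :
    a * Real.exp (-x) ≤ d ↔ Real.log (a / d) ≤ x := by
  rw [Real.log_le_iff_le_exp (div_pos ha hd), div_le_iff₀' hd, Real.exp_neg,
    mul_inv_le_iff₀ (Real.exp_pos x)]

theorem two_mul_mul_le_sq_add_of_le_sub_sqrt {b c x : ℝ} (hx : x ≤ b - √(b ^ 2 - c)) :
    2 * b * x ≤ x ^ 2 + c := by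
  have hsq : b ^ 2 - c ≤ (b - x) ^ 2 := (Real.sqrt_le_iff.mp (le_sub_comm.mp hx)).2
  linarith [sub_sq b x]

theorem le_sq_sub_half_div_two_mul {ε L α : ℝ} (hα0 : 0 < α)
    (hα : α ≤ 2 * ε + 4 * L - 2 * √((ε + 2 * L) ^ 2 - ε ^ 2)) :
    L ≤ (ε - α / 2) ^ 2 / (2 * α) := by
  have hroot : α / 2 ≤ (ε + 2 * L) - √((ε + 2 * L) ^ 2 - ε ^ 2) := by linarith
  have hquad : 2 * (ε + 2 * L) * (α / 2) ≤ (α / 2) ^ 2 + ε ^ 2 :=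
    two_mul_mul_le_sq_add_of_le_sub_sqrt hroot
  rw [le_div_iff₀ (by positivity)]
  linarith

/-- The range claim (*) in the proof of Theorem 1: the tail bound
`2 exp(−(ε − α/2)²/(2α)) ≤ δ` holds for every
`α ∈ (0, 2ε + 4L − 2√((ε + 2L)² − ε²)]`, where `L = log(2/δ)`. -/
theorem tail_bound_range (ε δ : ℝ) (hε : 0 < ε) (hδ0 : 0 < δ) (hδ2 : δ < 2)
    (L : ℝ) (hL : L = Real.log (2 / δ))
    (α : ℝ) (hα0 : 0 < α)
    (hα : α ≤ 2 * ε + 4 * L - 2 * Real.sqrt ((ε + 2 * L) ^ 2 - ε ^ 2)) :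
    2 * Real.exp (-(ε - α / 2) ^ 2 / (2 * α)) ≤ δ := by
  rw [neg_div, mul_exp_neg_le_iff_log_div_le two_pos hδ0, ← hL]
  exact le_sq_sub_half_div_two_mul hα0 hα
end
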